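/- arXiv:2106.10647 — 3 statements merged into one kernel-verified Lean document; each statement's English description precedes it below -/
import Mathlib

section
/- Let (a_n)_{n≥0} be a sequence of pairwise distinct real numbers converging to some limit. Then every term of (a_n) is a wall if and only if there exists a set S ⊆ ℕ such that the subsequence of (a_n) indexed by S is strictly increasing, the subsequence indexed by the complement of S is strictly decreasing, and a_i < a_j whenever i ∈ S and j ∉ S (one of the two index sets may be finite or empty). -/
/-!
When consecutive terms differ, a wall is a term that all later terms exceed or that exceeds all
later terms. Splitting the indices according to which side the later terms lie on gives `S`; two
terms of different kinds are compared by asking the earlier of the two.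
-/

variable {ι α : Type*}

/-- The term `a n` is a wall: all later terms compare with `a n` as its immediate successor does.
Indices are taken in an arbitrary successor order, such as `ℕ`, where `Order.succ n` is `n + 1`. -/
def IsWall [Preorder ι] [SuccOrder ι] [LT α] (a : ι → α) (n : ι) : Prop :=
  (a n < a (Order.succ n) → ∀ m, n < m → a n < a m) ∧
  (a (Order.succ n) < a n → ∀ m, n < m → a m < a n) ∧
  (a (Order.succ n) = a n → ∀ m, n < m → a m = a n)

theorem isWall_iff_forall_lt_or_forall_gt [PartialOrder ι] [SuccOrder ι] [LinearOrder α]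
    {a : ι → α} {n : ι} (hne : a (Order.succ n) ≠ a n) :
    IsWall a n ↔ (∀ m, n < m → a n < a m) ∨ (∀ m, n < m → a m < a n) := by
  have hn : n < Order.succ n := (Order.le_succ n).lt_of_ne' (ne_of_apply_ne a hne)
  constructor
  · rintro ⟨habove, hbelow, -⟩
    exact hne.lt_or_gt.symm.imp habove hbelow
  · rintro (habove | hbelow)
    · exact ⟨fun _ ↦ habove, fun h ↦ absurd h (habove _ hn).not_gt, fun h ↦ absurd h hne⟩
    · exact ⟨fun h ↦ absurd h (hbelow _ hn).not_gt, fun _ ↦ hbelow, fun h ↦ absurd h hne⟩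

theorem exists_strictMonoOn_strictAntiOn_compl_of_forall_lt_or_forall_gt
    [LinearOrder ι] [Preorder α] {a : ι → α}
    (h : ∀ n, (∀ m, n < m → a n < a m) ∨ (∀ m, n < m → a m < a n)) :
    ∃ S : Set ι, StrictMonoOn a S ∧ StrictAntiOn a Sᶜ ∧ ∀ i ∈ S, ∀ j ∉ S, a i < a j := by
  let S : Set ι := {i | ∀ m, i < m → a i < a m}
  have hbelow : ∀ j ∉ S, ∀ m, j < m → a m < a j := fun j hj ↦ (h j).resolve_left hj
  refine ⟨S, fun i hi j _ ↦ hi j, fun i hi j _ ↦ hbelow i hi j, fun i hi j hj ↦ ?_⟩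
  rcases lt_or_gt_of_ne (ne_of_mem_of_not_mem hi hj) with hij | hji
  · exact hi j hij
  · exact hbelow j hj i hji

theorem forall_lt_or_forall_gt_of_strictMonoOn_of_strictAntiOn_compl
    [Preorder ι] [Preorder α] {a : ι → α} {S : Set ι} (hmono : StrictMonoOn a S)
    (hanti : StrictAntiOn a Sᶜ) (hlt : ∀ i ∈ S, ∀ j ∉ S, a i < a j) (n : ι) :
    (∀ m, n < m → a n < a m) ∨ (∀ m, n < m → a m < a n) := by
  by_cases hn : n ∈ S
  · refine .inl fun m hnm ↦ ?_
    by_cases hm : m ∈ S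
    · exact hmono hn hm hnm
    · exact hlt n hn m hm
  · refine .inr fun m hnm ↦ ?_
    by_cases hm : m ∈ S
    · exact hlt m hm n hn
    · exact hanti hn hm hnm

theorem stmt_6_general [LinearOrder ι] [SuccOrder ι] [LinearOrder α] (a : ι → α)
    (hne : ∀ n, a (Order.succ n) ≠ a n) :
    (∀ n, IsWall a n) ↔
      ∃ S : Set ι, StrictMonoOn a S ∧ StrictAntiOn a Sᶜ ∧ ∀ i ∈ S, ∀ j ∉ S, a i < a j := by
  simp only [fun n ↦ isWall_iff_forall_lt_or_forall_gt (hne n)]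
  constructor
  · exact exists_strictMonoOn_strictAntiOn_compl_of_forall_lt_or_forall_gt
  · rintro ⟨S, hmono, hanti, hlt⟩
    exact forall_lt_or_forall_gt_of_strictMonoOn_of_strictAntiOn_compl hmono hanti hlt

/-- For a convergent sequence of distinct reals, every term is a wall iff the sequence
splits into an increasing subsequence lying entirely to the left of a decreasing
subsequence. -/
theorem stmt_6 (a : ℕ → ℝ) (hinj : Function.Injective a)
    (hconv : ∃ L : ℝ, Filter.Tendsto a Filter.atTop (nhds L)) :
    (∀ n : ℕ,
      (a (n+1) > a n → ∀ m, n < m → a m > a n) ∧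
      (a (n+1) < a n → ∀ m, n < m → a m < a n) ∧
      (a (n+1) = a n → ∀ m, n < m → a m = a n)) ↔
    (∃ S : Set ℕ,
      (∀ i ∈ S, ∀ j ∈ S, i < j → a i < a j) ∧
      (∀ i ∉ S, ∀ j ∉ S, i < j → a j < a i) ∧
      (∀ i ∈ S, ∀ j ∉ S, a i < a j)) :=
  stmt_6_general a fun n ↦ hinj.ne n.succ_ne_self
end

section
/- Let 0 < r < 1 and define f : [−1, 1] → [−1, 1] by f(x) = r·x·sin(1/x) for x ≠ 0 and f(0) = 0. Then for every continuous map g : [−1, 1] → [−1, 1] admitting no 2-cycle and every p ∈ [−1, 1], there exists q ∈ [−1, 1] such that the sequences (gⁿ(p))_{n≥0} and (fⁿ(q))_{n≥0} have the same order pattern; that is, for all m, n: gᵐ(p) < gⁿ(p) if and only if fᵐ(q) < fⁿ(q). -/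
/-!
If `g` has no 2-cycle and `x < g x`, then every later iterate of `x` lies above `x`, and dually if
`g x < x`. So the order pattern of an orbit of `g` is determined by the comparisons of consecutive
terms, which form a sequence of signs that stays at "equal" once it gets there.

On the other side, `f x = r * x * sin (1 / x)` maps some compact subset of each one-sided
neighbourhood of `0`, however small, onto a neighbourhood of `0`. Hence compact sets `K 0`, `K 1`, …
can be chosen on prescribed sides of `0`, each covered by the image of the previous one and much
closer to `0`. A point whose orbit passes through all of them has `|fⁿ q|` strictly decreasing, so
`fⁿ q` compares to every later term as it compares to `0`, that is, as prescribed.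
-/

open Filter Function Set Topology

section StepDetermined

variable {α β : Type*} [LinearOrder α] [LinearOrder β]

/-- A sequence is step-determined if each term compares to all later terms in the same way as it
compares to the next one, so that the order pattern can be read off the consecutive comparisons. -/
def StepDetermined (u : ℕ → α) : Prop :=
  ∀ ⦃m n⦄, m < n → cmp (u m) (u n) = cmp (u m) (u (m + 1))

lemma StepDetermined.lt_iff_lt {u : ℕ → α} {v : ℕ → β} (hu : StepDetermined u)
    (hv : StepDetermined v) (huv : ∀ n, cmp (u n) (u (n + 1)) = cmp (v n) (v (n + 1))) (m n : ℕ) :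
    u m < u n ↔ v m < v n := by
  have cmp_eq {i j : ℕ} (hij : i < j) : cmp (u i) (u j) = cmp (v i) (v j) := by
    rw [hu hij, hv hij, huv]
  rcases lt_trichotomy m n with hmn | rfl | hnm
  · exact lt_iff_lt_of_cmp_eq_cmp (cmp_eq hmn)
  · simp only [lt_irrefl]
  · exact lt_iff_lt_of_cmp_eq_cmp (cmp_eq_cmp_symm.1 (cmp_eq hnm))

lemma StepDetermined.cmp_succ_eq_eq {u : ℕ → α} (hu : StepDetermined u) {n : ℕ}
    (hn : cmp (u n) (u (n + 1)) = .eq) : cmp (u (n + 1)) (u (n + 2)) = .eq := by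
  have h₁ : u n = u (n + 1) := (cmp_eq_eq_iff _ _).1 hn
  have h₂ : u n = u (n + 2) := (cmp_eq_eq_iff _ _).1 ((hu (by lia)).trans hn)
  exact (cmp_eq_eq_iff _ _).2 (h₁.symm.trans h₂)

end StepDetermined

section NoTwoCycle

variable {α : Type*} [CompleteLinearOrder α] [DenselyOrdered α] [TopologicalSpace α]
  [OrderTopology α] {g : α → α} {x y : α}

lemma lt_apply_apply_of_lt_apply (hg : Continuous g) (hcyc : ∀ x, g (g x) = x → g x = x)
    (hx : x < g x) : x < g (g x) := by
  by_contra! hle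
  have hgg : Continuous (g ∘ g) := hg.comp hg
  have hne : (fixedPoints (g ∘ g) ∩ Iic x).Nonempty := by
    obtain ⟨w, hw, hfix⟩ := exists_mem_Icc_isFixedPt hgg.continuousOn bot_le bot_le hle
    exact ⟨w, hfix, hw.2⟩
  obtain ⟨w, ⟨hw, hwx⟩, hgreatest⟩ :=
    ((isClosed_fixedPoints hgg).inter isClosed_Iic).isCompact.exists_isGreatest hne
  have hgw : g w = w := hcyc w hw
  obtain ⟨t, ht, hgt⟩ : x ∈ g '' Icc w x :=
    intermediate_value_Icc hwx hg.continuousOn ⟨hgw.trans_le hwx, hx.le⟩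
  obtain ⟨z, hz, hfix⟩ := exists_mem_Icc_isFixedPt hgg.continuousOn ht.2
    (by simpa only [comp_apply, hgt] using ht.2.trans hx.le) hle
  have htw : t = w := le_antisymm (hz.1.trans (hgreatest ⟨hfix, hz.2⟩)) ht.1
  have hwx_eq : w = x := by rw [← hgt, htw, hgw]
  exact hx.ne' (hwx_eq ▸ hgw)

lemma lt_apply_of_mem_Icc_apply (hg : Continuous g) (hcyc : ∀ x, g (g x) = x → g x = x)
    (hx : x < g x) (hy : y ∈ Icc x (g x)) : x < g y := by
  by_contra! hle
  obtain ⟨z, hz, hgz⟩ := exists_mem_Icc_isFixedPt hg.continuousOn hy.1 hx.le (hle.trans hy.1)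
  obtain ⟨t, ht, rfl⟩ : y ∈ g '' Icc x z :=
    intermediate_value_Icc' hz.1 hg.continuousOn ⟨hgz.trans_le hz.2, hy.2⟩
  have htg : t < g t := by
    refine (ht.2.trans hz.2).lt_of_ne fun htg ↦ ?_
    rw [← htg, ← htg] at hle
    have htx : t = x := le_antisymm hle ht.1
    exact hx.ne (htx ▸ htg)
  exact (ht.1.trans_lt (lt_apply_apply_of_lt_apply hg hcyc htg)).not_ge hle

-- As long as the orbit of `y` descends it stays in `(x, g x]`; at the first ascent, `y < g y`, the
-- interval `(y, g y]` takes over the role of `(x, g x]`.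
lemma lt_iterate_of_mem_Ioc_apply (hg : Continuous g) (hcyc : ∀ x, g (g x) = x → g x = x) (n : ℕ)
    (hy : y ∈ Ioc x (g x)) : x < g^[n] y := by
  induction n generalizing x y with
  | zero => exact hy.1
  | succ n ih =>
    rw [iterate_succ_apply]
    rcases le_or_gt (g y) y with hdown | hup
    · have hxgy : x < g y :=
        lt_apply_of_mem_Icc_apply hg hcyc (hy.1.trans_le hy.2) (Ioc_subset_Icc_self hy)
      exact ih ⟨hxgy, hdown.trans hy.2⟩
    · exact hy.1.trans (ih ⟨hup, le_rfl⟩)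

lemma lt_iterate_succ_of_lt_apply (hg : Continuous g) (hcyc : ∀ x, g (g x) = x → g x = x) (n : ℕ)
    (hx : x < g x) : x < g^[n + 1] x :=
  lt_iterate_of_mem_Ioc_apply hg hcyc n ⟨hx, le_rfl⟩

lemma stepDetermined_iterate (hg : Continuous g) (hcyc : ∀ x, g (g x) = x → g x = x) (p : α) :
    StepDetermined fun n ↦ g^[n] p := by
  intro m n hmn
  obtain ⟨k, rfl⟩ := Nat.exists_eq_add_of_lt hmn
  have hn : g^[m + k + 1] p = g^[k + 1] (g^[m] p) := by
    rw [← iterate_add_apply, Nat.add_comm (k + 1), Nat.add_assoc]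
  simp only [hn, iterate_succ_apply' g m]
  generalize g^[m] p = x
  rcases lt_trichotomy x (g x) with hx | hx | hx
  · rw [hx.cmp_eq_lt, (lt_iterate_succ_of_lt_apply hg hcyc k hx).cmp_eq_lt]
  · rw [iterate_fixed hx.symm, ← hx]
  · have hdual : g^[k + 1] x < x := lt_iterate_succ_of_lt_apply (α := αᵒᵈ) hg hcyc k hx
    rw [hx.cmp_eq_gt, hdual.cmp_eq_gt]

lemma stepDetermined_iterate_of_mapsTo_Icc {α : Type*} [ConditionallyCompleteLinearOrder α]
    [DenselyOrdered α] [TopologicalSpace α] [OrderTopology α] {g : α → α} {a b p : α}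
    (hg : ContinuousOn g (Icc a b)) (hmaps : MapsTo g (Icc a b) (Icc a b))
    (hcyc : ∀ x ∈ Icc a b, g (g x) = x → g x = x) (hp : p ∈ Icc a b) :
    StepDetermined fun n ↦ g^[n] p := by
  have : Fact (a ≤ b) := ⟨hp.1.trans hp.2⟩
  have hstep := stepDetermined_iterate (hg.mapsToRestrict hmaps)
    (fun x hx ↦ Subtype.ext (hcyc x x.2 (congrArg Subtype.val hx))) ⟨p, hp⟩
  intro m n hmn
  have h := hstep hmn
  simp only [MapsTo.iterate_restrict] at h
  exact h

end NoTwoCycle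

lemma exists_forall_iterate_mem_of_surjOn {X : Type*} [TopologicalSpace X] [T2Space X] {f : X → X}
    {K : ℕ → Set X} (hf : Continuous f) (hK : ∀ n, IsCompact (K n)) (hne : ∀ n, (K n).Nonempty)
    (hsurj : ∀ n, SurjOn f (K n) (K (n + 1))) : ∃ q, ∀ n, f^[n] q ∈ K n := by
  let L (n : ℕ) : Set X := {q | ∀ i ≤ n, f^[i] q ∈ K i}
  have hsurjL (n : ℕ) : SurjOn f^[n] (L n) (K n) := by
    induction n with
    | zero => exact fun y hy ↦ ⟨y, fun i hi ↦ by obtain rfl := Nat.le_zero.1 hi; exact hy, rfl⟩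
    | succ n ih =>
      intro y hy
      obtain ⟨z, hz, hzy⟩ := hsurj n hy
      obtain ⟨q, hq, rfl⟩ := ih hz
      rw [← iterate_succ_apply' f] at hzy
      refine ⟨q, fun i hi ↦ ?_, hzy⟩
      rcases Nat.le_succ_iff.1 hi with hi | rfl
      · exact hq i hi
      · exact hzy ▸ hy
  have hclosed (n : ℕ) : IsClosed (L n) := by
    simp only [L, ofPred_forall]
    exact isClosed_biInter fun i _ ↦ (hK i).isClosed.preimage (hf.iterate i)
  obtain ⟨q, hq⟩ := IsCompact.nonempty_iInter_of_sequence_nonempty_isCompact_isClosed L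
    (fun n q hq i hi ↦ hq i (hi.trans n.le_succ))
    (fun n ↦ let ⟨y, hy⟩ := hne n; let ⟨q, hq, _⟩ := hsurjL n hy; ⟨q, hq⟩)
    ((hK 0).of_isClosed_subset (hclosed 0) fun q hq ↦ hq 0 le_rfl) hclosed
  exact ⟨q, fun n ↦ mem_iInter.1 hq n n le_rfl⟩

section Shrinking

variable {α : Type*} [AddCommGroup α] [LinearOrder α] [IsOrderedAddMonoid α]

lemma cmp_eq_cmp_zero_of_abs_lt {x y : α} (h : y = 0 ∨ |y| < |x|) : cmp x y = cmp x 0 := by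
  rcases h with rfl | h
  · rfl
  rcases lt_trichotomy x 0 with hx | rfl | hx
  · rw [abs_of_neg hx] at h
    rw [hx.cmp_eq_lt, (neg_lt_neg_iff.1 ((neg_le_abs y).trans_lt h)).cmp_eq_lt]
  · exact absurd h (by simp only [abs_zero, not_lt, abs_nonneg])
  · rw [abs_of_pos hx] at h
    rw [hx.cmp_eq_gt, ((le_abs_self y).trans_lt h).cmp_eq_gt]

lemma cmp_eq_cmp_zero_of_abs_succ_lt {v : ℕ → α}
    (hv : ∀ n, v (n + 1) = 0 ∨ |v (n + 1)| < |v n|) {m n : ℕ} (hmn : m < n) :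
    cmp (v m) (v n) = cmp (v m) 0 := by
  refine cmp_eq_cmp_zero_of_abs_lt ?_
  induction n, hmn using Nat.le_induction with
  | base => exact hv m
  | succ n _ ih =>
    rcases hv n with h0 | hlt
    · exact .inl h0
    · rcases ih with h0 | hlt'
      · exact absurd hlt (by simp only [h0, abs_zero, not_lt, abs_nonneg])
      · exact .inr (hlt.trans hlt')

lemma stepDetermined_of_abs_succ_lt {v : ℕ → α}
    (hv : ∀ n, v (n + 1) = 0 ∨ |v (n + 1)| < |v n|) : StepDetermined v := fun m n hmn ↦ by
  rw [cmp_eq_cmp_zero_of_abs_succ_lt hv hmn, cmp_eq_cmp_zero_of_abs_succ_lt hv m.lt_succ_self]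

end Shrinking

/-- `f` takes both negative and positive values arbitrarily far along the filter `l`. This property
of `f` on both sides of `0` is what makes every step-determined pattern occur in an orbit of `f`. -/
def OscillatesAlong {X : Type*} (f : X → ℝ) (l : Filter X) : Prop :=
  (∃ᶠ x in l, f x < 0) ∧ ∃ᶠ x in l, 0 < f x

section Realization

lemma exists_isCompact_subset_image_mem_nhds_zero {X : Type*} [ConditionallyCompleteLinearOrder X]
    [DenselyOrdered X] [TopologicalSpace X] [OrderTopology X] {f : X → ℝ} {s : Set X}
    (hs : s.OrdConnected) (hf : ContinuousOn f s) (hneg : ∃ x ∈ s, f x < 0)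
    (hpos : ∃ x ∈ s, 0 < f x) : ∃ K ⊆ s, IsCompact K ∧ f '' K ∈ 𝓝 0 := by
  obtain ⟨x, hx, hfx⟩ := hneg
  obtain ⟨y, hy, hfy⟩ := hpos
  have hsub : uIcc x y ⊆ s := hs.uIcc_subset hx hy
  exact ⟨uIcc x y, hsub, isCompact_uIcc, mem_of_superset (Icc_mem_nhds hfx hfy)
    (Icc_subset_uIcc.trans (intermediate_value_uIcc (hf.mono hsub)))⟩

/-- For `0 < ε`, the points `x` with `|x| < ε` whose comparison with `0` is the given one: the orbit
of `f` is to visit such a set at each step. The case `.eq` is `{0}` for every `ε`. -/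
def signBall : Ordering → ℝ → Set ℝ
  | .lt, ε => Ioo (-ε) 0
  | .eq, _ => {0}
  | .gt, ε => Ioo 0 ε

lemma mem_signBall {σ : Ordering} {ε x : ℝ} (hε : 0 < ε) :
    x ∈ signBall σ ε ↔ cmp x 0 = σ ∧ |x| < ε := by
  cases σ
  · simp only [signBall, mem_Ioo, cmp_eq_lt_iff, abs_lt]
    grind
  · simp only [signBall, mem_singleton_iff, cmp_eq_eq_iff]
    grind
  · simp only [signBall, mem_Ioo, cmp_eq_gt_iff, abs_lt]
    grind

lemma signBall_nonempty (σ : Ordering) {ε : ℝ} (hε : 0 < ε) : (signBall σ ε).Nonempty := by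
  cases σ
  · exact nonempty_Ioo.2 (neg_lt_zero.2 hε)
  · exact singleton_nonempty 0
  · exact nonempty_Ioo.2 hε

variable {f : ℝ → ℝ}

lemma OscillatesAlong.exists_isCompact_subset_Ioo {l : Filter ℝ} (h : OscillatesAlong f l)
    (hf : Continuous f) {a b : ℝ} (hab : Ioo a b ∈ l) :
    ∃ K ⊆ Ioo a b, IsCompact K ∧ f '' K ∈ 𝓝 0 := by
  have hneg := (h.1.and_eventually hab).exists
  have hpos := (h.2.and_eventually hab).exists
  exact exists_isCompact_subset_image_mem_nhds_zero ordConnected_Ioo hf.continuousOn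
    (hneg.imp fun _ ↦ And.symm) (hpos.imp fun _ ↦ And.symm)

lemma exists_isCompact_subset_signBall (hf : Continuous f) (hleft : OscillatesAlong f (𝓝[<] 0))
    (hright : OscillatesAlong f (𝓝[>] 0)) {σ : Ordering} (hσ : σ ≠ .eq) {ε : ℝ} (hε : 0 < ε) :
    ∃ K ⊆ signBall σ ε, IsCompact K ∧ f '' K ∈ 𝓝 0 := by
  cases σ with
  | lt => exact hleft.exists_isCompact_subset_Ioo hf (Ioo_mem_nhdsLT (neg_lt_zero.2 hε))
  | eq => exact absurd rfl hσ
  | gt => exact hright.exists_isCompact_subset_Ioo hf (Ioo_mem_nhdsGT hε)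

lemma exists_isCompact_surjOn_signBall (hf : Continuous f) (hf0 : f 0 = 0)
    (hleft : OscillatesAlong f (𝓝[<] 0)) (hright : OscillatesAlong f (𝓝[>] 0)) {σ τ : Ordering}
    (hστ : σ = .eq → τ = .eq) {ε : ℝ} (hε : 0 < ε) :
    ∃ K ⊆ signBall σ ε, IsCompact K ∧ ∃ δ > 0, SurjOn f K (signBall τ δ) ∧
      ∀ x ∈ K, ∀ y ∈ signBall τ δ, y = 0 ∨ |y| < |x| := by
  by_cases hσ : σ = .eq
  · obtain rfl := hστ hσ
    subst hσ
    exact ⟨{0}, subset_rfl, isCompact_singleton, 1, one_pos,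
      singleton_subset_iff.2 ⟨0, rfl, hf0⟩, fun _ _ _ hy ↦ .inl hy⟩
  · obtain ⟨K, hKσ, hK, hfK⟩ := exists_isCompact_subset_signBall hf hleft hright hσ hε
    have h0K : (0 : ℝ) ∉ K := fun h0 ↦
      hσ (((mem_signBall hε).1 (hKσ h0)).1.symm.trans (cmp_self_eq_eq 0))
    obtain ⟨δ, hδ, hball⟩ :=
      Metric.mem_nhds_iff.1 (inter_mem hfK (hK.isClosed.isOpen_compl.mem_nhds h0K))
    have abs_lt {y : ℝ} (hy : y ∈ signBall τ δ) : |y| < δ := ((mem_signBall hδ).1 hy).2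
    refine ⟨K, hKσ, hK, δ, hδ, fun y hy ↦ ?_, fun x hx y hy ↦ .inr ?_⟩
    · exact (hball (mem_ball_zero_iff.2 (abs_lt hy))).1
    · have hδx : δ ≤ |x| := not_lt.1 fun hlt ↦ (hball (mem_ball_zero_iff.2 hlt)).2 hx
      exact (abs_lt hy).trans_le hδx

lemma exists_orbit_cmp_zero_eq (hf : Continuous f) (hf0 : f 0 = 0)
    (hleft : OscillatesAlong f (𝓝[<] 0)) (hright : OscillatesAlong f (𝓝[>] 0)) {σ : ℕ → Ordering}
    (hσ : ∀ n, σ n = .eq → σ (n + 1) = .eq) {ε : ℝ} (hε : 0 < ε) :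
    ∃ q, |q| < ε ∧ (∀ n, cmp (f^[n] q) 0 = σ n) ∧
      ∀ n, f^[n + 1] q = 0 ∨ |f^[n + 1] q| < |f^[n] q| := by
  choose K hKσ hK δ hδ hsurj habs using fun n (ε : {ε : ℝ // 0 < ε}) ↦
    exists_isCompact_surjOn_signBall hf hf0 hleft hright (hσ n) ε.2
  let radius : ℕ → {ε : ℝ // 0 < ε} := Nat.rec ⟨ε, hε⟩ fun n ε ↦ ⟨δ n ε, hδ n ε⟩
  have hsub (n : ℕ) : K (n + 1) (radius (n + 1)) ⊆ signBall (σ (n + 1)) (δ n (radius n)) :=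
    hKσ (n + 1) (radius (n + 1))
  have hne (n : ℕ) : (K n (radius n)).Nonempty :=
    let ⟨_, hy⟩ := signBall_nonempty (σ (n + 1)) (hδ n (radius n))
    let ⟨x, hx, _⟩ := hsurj n (radius n) hy
    ⟨x, hx⟩
  obtain ⟨q, hq⟩ := exists_forall_iterate_mem_of_surjOn hf (fun n ↦ hK n (radius n)) hne
    fun n ↦ (hsurj n (radius n)).mono subset_rfl (hsub n)
  have hmem (n : ℕ) := (mem_signBall (radius n).2).1 (hKσ n (radius n) (hq n))
  exact ⟨q, (hmem 0).2, fun n ↦ (hmem n).1,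
    fun n ↦ habs n (radius n) _ (hq n) _ (hsub n (hq (n + 1)))⟩

theorem StepDetermined.exists_orbit_lt_iff_lt {α : Type*} [LinearOrder α] {u : ℕ → α}
    (hu : StepDetermined u) (hf : Continuous f) (hf0 : f 0 = 0)
    (hleft : OscillatesAlong f (𝓝[<] 0)) (hright : OscillatesAlong f (𝓝[>] 0)) {ε : ℝ}
    (hε : 0 < ε) : ∃ q, |q| < ε ∧ ∀ m n, u m < u n ↔ f^[m] q < f^[n] q := by
  obtain ⟨q, hq, hsign, habs⟩ :=
    exists_orbit_cmp_zero_eq hf hf0 hleft hright (fun n ↦ hu.cmp_succ_eq_eq (n := n)) hε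
  refine ⟨q, hq, hu.lt_iff_lt (stepDetermined_of_abs_succ_lt habs) fun n ↦ ?_⟩
  rw [← hsign n, cmp_eq_cmp_zero_of_abs_lt (habs n)]

end Realization

section Oscillation

lemma OscillatesAlong.mul_left {X : Type*} {f c : X → ℝ} {l : Filter X} (hf : OscillatesAlong f l)
    (hc : (∀ᶠ x in l, c x < 0) ∨ ∀ᶠ x in l, 0 < c x) : OscillatesAlong (fun x ↦ c x * f x) l := by
  rcases hc with hc | hc
  · exact ⟨(hf.2.and_eventually hc).mono fun x hx ↦ mul_neg_of_neg_of_pos hx.2 hx.1,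
      (hf.1.and_eventually hc).mono fun x hx ↦ mul_pos_of_neg_of_neg hx.2 hx.1⟩
  · exact ⟨(hf.1.and_eventually hc).mono fun x hx ↦ mul_neg_of_pos_of_neg hx.2 hx.1,
      (hf.2.and_eventually hc).mono fun x hx ↦ mul_pos hx.2 hx.1⟩

lemma OscillatesAlong.of_comp {X Y : Type*} {f : Y → ℝ} {u : X → Y} {l : Filter X} {l' : Filter Y}
    (h : OscillatesAlong (f ∘ u) l) (hu : Tendsto u l l') : OscillatesAlong f l' :=
  ⟨hu.frequently h.1, hu.frequently h.2⟩

lemma OscillatesAlong.nhdsLT_zero_of_even {f : ℝ → ℝ} (h : OscillatesAlong f (𝓝[>] 0))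
    (hf : Function.Even f) : OscillatesAlong f (𝓝[<] 0) := by
  have hneg : f ∘ Neg.neg = f := funext hf
  have hlim : Tendsto Neg.neg (𝓝[>] (0 : ℝ)) (𝓝[<] 0) := by
    simpa only [neg_zero] using tendsto_neg_nhdsGT (a := (0 : ℝ))
  exact .of_comp (hneg.symm ▸ h) hlim

lemma OscillatesAlong.comp_one_div {φ : ℝ → ℝ} (h : OscillatesAlong φ atTop) :
    OscillatesAlong (fun x ↦ φ (1 / x)) (𝓝[>] 0) := by
  refine .of_comp ?_ tendsto_inv_atTop_nhdsGT_zero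
  simpa only [comp_def, one_div, inv_inv] using h

lemma frequently_atTop_of_periodic {β : Type*} {φ : ℝ → β} {c : ℝ} (hφ : Periodic φ c)
    (hc : 0 < c) {P : β → Prop} {x : ℝ} (hx : P (φ x)) : ∃ᶠ y in atTop, P (φ y) := by
  have hlim : Tendsto (fun n : ℕ ↦ x + n * c) atTop atTop :=
    tendsto_atTop_add_const_left _ _ (tendsto_natCast_atTop_atTop.atTop_mul_const hc)
  exact hlim.frequently (.of_forall fun n ↦ by rwa [hφ.nat_mul n x])

lemma oscillatesAlong_sin_atTop : OscillatesAlong Real.sin atTop :=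
  ⟨frequently_atTop_of_periodic (P := (· < 0)) Real.sin_periodic Real.two_pi_pos
      (x := -(Real.pi / 2)) (by norm_num),
    frequently_atTop_of_periodic (P := (0 < ·)) Real.sin_periodic Real.two_pi_pos
      (x := Real.pi / 2) (by norm_num)⟩

lemma oscillatesAlong_nhdsGT_mul_sin_one_div {r : ℝ} (hr : r ≠ 0) :
    OscillatesAlong (fun x ↦ r * x * Real.sin (1 / x)) (𝓝[>] 0) := by
  refine oscillatesAlong_sin_atTop.comp_one_div.mul_left ?_
  refine hr.lt_or_gt.imp (fun hr ↦ ?_) fun hr ↦ ?_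
  · filter_upwards [self_mem_nhdsWithin] with x hx using mul_neg_of_neg_of_pos hr hx
  · filter_upwards [self_mem_nhdsWithin] with x hx using mul_pos hr hx

lemma even_mul_sin_one_div (r : ℝ) : Function.Even fun x : ℝ ↦ r * x * Real.sin (1 / x) :=
  fun x ↦ by simp only [one_div, inv_neg, Real.sin_neg, mul_neg, neg_mul, neg_neg]

lemma continuous_mul_sin_one_div (r : ℝ) : Continuous fun x : ℝ ↦ r * x * Real.sin (1 / x) := by
  refine continuous_iff_continuousAt.2 fun x ↦ ?_
  rcases eq_or_ne x 0 with rfl | hx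
  · have hlim : Tendsto (fun x : ℝ ↦ r * x) (𝓝 0) (𝓝 0) := by
      simpa only [mul_zero] using (continuous_const_mul r).tendsto 0
    have hbdd : IsBoundedUnder (· ≤ ·) (𝓝 0) (norm ∘ fun x : ℝ ↦ Real.sin (1 / x)) :=
      isBoundedUnder_of ⟨1, fun x ↦ Real.abs_sin_le_one (1 / x)⟩
    simpa only [ContinuousAt, mul_zero, zero_mul] using hlim.zero_mul_isBoundedUnder_le hbdd
  · fun_prop (disch := exact hx)

end Oscillation

theorem stmt_13_general {α : Type*} [ConditionallyCompleteLinearOrder α] [DenselyOrdered α]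
    [TopologicalSpace α] [OrderTopology α] {r : ℝ} (hr : r ≠ 0) {f : ℝ → ℝ} (hf0 : f 0 = 0)
    (hfx : ∀ x : ℝ, x ≠ 0 → f x = r * x * Real.sin (1 / x)) {g : α → α} {a b : α}
    (hg : ContinuousOn g (Icc a b)) (hmaps : MapsTo g (Icc a b) (Icc a b))
    (hcyc : ¬ ∃ x ∈ Icc a b, ∃ y ∈ Icc a b, x ≠ y ∧ g x = y ∧ g y = x)
    {p : α} (hp : p ∈ Icc a b) {ε : ℝ} (hε : 0 < ε) :
    ∃ q : ℝ, |q| < ε ∧ ∀ m n : ℕ, g^[m] p < g^[n] p ↔ f^[m] q < f^[n] q := by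
  have hf : f = fun x ↦ r * x * Real.sin (1 / x) := by
    ext x
    rcases eq_or_ne x 0 with rfl | hx
    · simp only [hf0, mul_zero, zero_mul]
    · exact hfx x hx
  have hfix : ∀ x ∈ Icc a b, g (g x) = x → g x = x := fun x hx hggx ↦
    by_contra fun hne ↦ hcyc ⟨x, hx, g x, hmaps hx, Ne.symm hne, rfl, hggx⟩
  have hright : OscillatesAlong f (𝓝[>] 0) := hf ▸ oscillatesAlong_nhdsGT_mul_sin_one_div hr
  have hleft : OscillatesAlong f (𝓝[<] 0) :=
    hright.nhdsLT_zero_of_even (hf ▸ even_mul_sin_one_div r)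
  exact (stepDetermined_iterate_of_mapsTo_Icc hg hmaps hfix hp).exists_orbit_lt_iff_lt
    (hf ▸ continuous_mul_sin_one_div r) hf0 hleft hright hε

/-- For 0 < r < 1 the map f(x) = r x sin(1/x) on [-1,1] is universal: every orbit
pattern of any map on [-1,1] with no 2-cycle occurs as an orbit pattern of f. -/
theorem stmt_13 (r : ℝ) (hr0 : 0 < r) (hr1 : r < 1) (f : ℝ → ℝ)
    (hf0 : f 0 = 0) (hfx : ∀ x : ℝ, x ≠ 0 → f x = r * x * Real.sin (1 / x)) :
    ∀ g : ℝ → ℝ,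
      ContinuousOn g (Set.Icc (-1 : ℝ) 1) →
      Set.MapsTo g (Set.Icc (-1 : ℝ) 1) (Set.Icc (-1 : ℝ) 1) →
      (¬ ∃ x ∈ Set.Icc (-1 : ℝ) 1, ∃ y ∈ Set.Icc (-1 : ℝ) 1,
        x ≠ y ∧ g x = y ∧ g y = x) →
      ∀ p ∈ Set.Icc (-1 : ℝ) 1, ∃ q ∈ Set.Icc (-1 : ℝ) 1,
        ∀ m n : ℕ, (g^[m] p < g^[n] p ↔ f^[m] q < f^[n] q) := by
  intro g hg hmaps hcyc p hp
  obtain ⟨q, hq, hpattern⟩ := stmt_13_general hr0.ne' hf0 hfx hg hmaps hcyc hp one_pos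
  exact ⟨q, abs_le.1 hq.le, hpattern⟩
end

section
/- Define g : [−1, 1] → ℝ by g(x) = (x³/5)·sin(1/x) for x ≠ 0 and g(0) = 0. Then g maps [−1, 1] into itself, is Lipschitz with constant 4/5 (hence is a contraction), admits no 2-cycle, and is universal for the first Sharkovsky class on [−1, 1]: for every continuous map h : [−1, 1] → [−1, 1] admitting no 2-cycle and every p ∈ [−1, 1], there exists q ∈ [−1, 1] such that the sequences (hⁿ(p))_{n≥0} and (gⁿ(q))_{n≥0} have the same order pattern. -/
/-!
For a continuous self-map `h` of an interval without 2-cycles, `x < h x` forces `x < h^[n] x` for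
all `n ≥ 1`, and dually. Hence the order pattern of an orbit is determined by the comparisons of
each point with its successor alone. These comparisons can be any sequence in which equality, once
reached, persists. For a contraction `g` fixing `0` the comparison of `x` with `g x` is that of `x`
with `0`, so it remains to find `q` whose orbit has prescribed signs. This is possible as soon as
`g` takes both signs arbitrarily close to `0` on each side: every neighbourhood of `0` then
contains, on either side of `0`, a compact interval whose image is again a neighbourhood of `0`, and
nested compact sets yield `q`.
-/

open Filter Function Set Topology
open scoped NNReal

/-- A map without 2-cycles in `s`, i.e. a member of the first Sharkovsky class on `s`. -/
def TwoCycleFreeOn {α : Type*} (f : α → α) (s : Set α) : Prop :=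
  ¬ ∃ x ∈ s, ∃ y ∈ s, x ≠ y ∧ f x = y ∧ f y = x

/-- Two sequences, possibly with values in different orders, are ordered in the same way. -/
def SameOrderPattern {α β : Type*} [LT α] [LT β] (u : ℕ → α) (v : ℕ → β) : Prop :=
  ∀ m n, u m < u n ↔ v m < v n

theorem sameOrderPattern_of_cmp_eq {α β : Type*} [LinearOrder α] [LinearOrder β]
    {u : ℕ → α} {v : ℕ → β} (h : ∀ m n, m < n → cmp (u m) (u n) = cmp (v m) (v n)) :
    SameOrderPattern u v := by
  intro m n
  rcases lt_trichotomy m n with hmn | rfl | hnm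
  · exact lt_iff_lt_of_cmp_eq_cmp (h m n hmn)
  · simp only [lt_irrefl]
  · exact lt_iff_lt_of_cmp_eq_cmp (cmp_eq_cmp_symm.1 (h n m hnm))

theorem TwoCycleFreeOn.apply_eq_of_apply_apply_eq {α : Type*} {f : α → α} {s : Set α}
    (hf : TwoCycleFreeOn f s) (hmaps : MapsTo f s s) {x : α} (hx : x ∈ s) (h : f (f x) = x) :
    f x = x := by
  by_contra hne
  exact hf ⟨x, hx, f x, hmaps hx, Ne.symm hne, rfl, h⟩

section TwoCycleFree

variable {α : Type*} [ConditionallyCompleteLinearOrder α] [TopologicalSpace α] [OrderTopology α]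
  [DenselyOrdered α] {a b : α} {f : α → α}

-- Suppose `f (f x) ≤ x`, and let `w` be the last point of `[a, x]` with `f w ≤ w`. A preimage `y`
-- of `x` in `[w, x]` lies below `f (f y) = f x`, so `f` has a fixed point in `[y, x]`, beyond `w`.
theorem lt_apply_apply_of_lt_apply_s14 (hf : ContinuousOn f (Icc a b))
    (hmaps : MapsTo f (Icc a b) (Icc a b)) (hcycle : TwoCycleFreeOn f (Icc a b)) {x : α}
    (hx : x ∈ Icc a b) (hlt : x < f x) : x < f (f x) := by
  by_contra! hle
  have fixed_mem_Icc {y : α} (hy : y ∈ Icc a x) (hfy : y ≤ f (f y)) : ∃ z ∈ Icc y x, f z = z := by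
    have hsub : Icc y x ⊆ Icc a b := Icc_subset_Icc hy.1 hx.2
    obtain ⟨z, hz, hfz⟩ :=
      exists_mem_Icc_isFixedPt (f := f ∘ f) ((hf.comp hf hmaps).mono hsub) hy.2 hfy hle
    exact ⟨z, hz, hcycle.apply_eq_of_apply_apply_eq hmaps (hsub hz) hfz⟩
  obtain ⟨z₀, hz₀, hfz₀⟩ :=
    fixed_mem_Icc ⟨le_rfl, hx.1⟩ (hmaps (hmaps ⟨le_rfl, hx.1.trans hx.2⟩)).1
  have hclosed : IsClosed {y ∈ Icc a x | f y ≤ y} :=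
    isClosed_Icc.isClosed_le (hf.mono (Icc_subset_Icc_right hx.2)) continuousOn_id
  obtain ⟨w, ⟨hw, hfw⟩, hwmax⟩ := (isCompact_Icc.of_isClosed_subset hclosed
    (sep_subset _ _)).exists_isGreatest ⟨z₀, hz₀, hfz₀.le⟩
  obtain ⟨y, hy, hfy⟩ := intermediate_value_Icc hw.2 (hf.mono (Icc_subset_Icc hw.1 hx.2))
    ⟨hfw.trans hw.2, hlt.le⟩
  have hwy : w < y := hy.1.lt_of_ne <| by
    rintro rfl
    rw [le_antisymm hw.2 (hfy ▸ hfw)] at hfw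
    exact hlt.not_ge hfw
  have hyffy : y ≤ f (f y) := by
    rw [hfy]
    exact hy.2.trans hlt.le
  obtain ⟨z, hz, hfz⟩ := fixed_mem_Icc ⟨hw.1.trans hy.1, hy.2⟩ hyffy
  have hzw : z ≤ w := hwmax ⟨⟨(hw.1.trans hy.1).trans hz.1, hz.2⟩, hfz.le⟩
  exact (hwy.trans_le hz.1).not_ge hzw

theorem lt_apply_of_mem_Icc_apply_s14 (hf : ContinuousOn f (Icc a b))
    (hmaps : MapsTo f (Icc a b) (Icc a b)) (hcycle : TwoCycleFreeOn f (Icc a b)) {x y : α}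
    (hx : x ∈ Icc a b) (hlt : x < f x) (hy : y ∈ Icc x (f x)) : x < f y := by
  by_contra! hle
  have hyb : y ≤ b := hy.2.trans (hmaps hx).2
  obtain ⟨u, hu, hfu⟩ :=
    intermediate_value_Icc' hy.1 (hf.mono (Icc_subset_Icc hx.1 hyb)) ⟨hle.trans hy.1, hy.2⟩
  rcases hu.2.eq_or_lt with rfl | huy
  · rw [hfu] at hle
    rw [le_antisymm hle hu.1] at hfu
    exact hlt.ne' hfu
  · have hlt_twice : u < f (f u) := lt_apply_apply_of_lt_apply_s14 hf hmaps hcycle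
      ⟨hx.1.trans hu.1, hu.2.trans hyb⟩ (hfu ▸ huy)
    rw [hfu] at hlt_twice
    exact (hle.trans hu.1).not_gt hlt_twice

-- If `i` is the first index with `f^[k + 1] x ≤ f^[i + 1] x`, then `t := f^[i] x` satisfies
-- `x ≤ t ≤ f^[k + 1] x ≤ f t`, so the orbit cannot jump below `x` from `f^[k + 1] x`.
theorem lt_iterate_succ_of_lt_apply_s14 (hf : ContinuousOn f (Icc a b))
    (hmaps : MapsTo f (Icc a b) (Icc a b)) (hcycle : TwoCycleFreeOn f (Icc a b)) {x : α}
    (hx : x ∈ Icc a b) (hlt : x < f x) (n : ℕ) : x < f^[n + 1] x := by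
  induction n using Nat.strong_induction_on with
  | _ n ih =>
    rcases n with _ | k
    · exact hlt
    have hexists : ∃ i, f^[k + 1] x ≤ f^[i + 1] x := ⟨k, le_rfl⟩
    obtain ⟨i, hi, hik, hmin⟩ : ∃ i, f^[k + 1] x ≤ f^[i + 1] x ∧ i ≤ k ∧
        ∀ j < i, f^[j + 1] x < f^[k + 1] x :=
      ⟨Nat.find hexists, Nat.find_spec hexists, Nat.find_min' hexists le_rfl,
        fun j hj => not_le.1 (Nat.find_min hexists hj)⟩
    have hxt : x ≤ f^[i] x := by
      rcases i with _ | j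
      · exact le_rfl
      · exact (ih j (by lia)).le
    have hty : f^[i] x < f^[k + 1] x := by
      rcases i with _ | j
      · exact ih k (by lia)
      · exact hmin j (by lia)
    rw [iterate_succ_apply' f i] at hi
    rw [iterate_succ_apply']
    exact hxt.trans_lt <| lt_apply_of_mem_Icc_apply_s14 hf hmaps hcycle (hmaps.iterate i hx)
      (hty.trans_le hi) ⟨hty.le, hi⟩

theorem iterate_succ_lt_of_apply_lt (hf : ContinuousOn f (Icc a b))
    (hmaps : MapsTo f (Icc a b) (Icc a b)) (hcycle : TwoCycleFreeOn f (Icc a b)) {x : α}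
    (hx : x ∈ Icc a b) (hlt : f x < x) (n : ℕ) : f^[n + 1] x < x := by
  have hdual : Icc (OrderDual.toDual b) (OrderDual.toDual a) = OrderDual.ofDual ⁻¹' Icc a b :=
    Icc_toDual
  exact lt_iterate_succ_of_lt_apply_s14 (α := αᵒᵈ) (f := f) (x := x)
    (a := OrderDual.toDual b) (b := OrderDual.toDual a) (by rw [hdual]; exact hf)
    (by rw [hdual]; exact hmaps) (by rw [hdual]; exact hcycle) (by rw [hdual]; exact hx) hlt n

theorem cmp_iterate_iterate_of_lt (hf : ContinuousOn f (Icc a b))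
    (hmaps : MapsTo f (Icc a b) (Icc a b)) (hcycle : TwoCycleFreeOn f (Icc a b)) {x : α}
    (hx : x ∈ Icc a b) {m n : ℕ} (hmn : m < n) :
    cmp (f^[m] x) (f^[n] x) = cmp (f^[m] x) (f^[m + 1] x) := by
  obtain ⟨k, rfl⟩ := Nat.exists_eq_add_of_lt hmn
  rw [show m + k + 1 = (k + 1) + m by ring, iterate_add_apply, iterate_succ_apply' f m]
  have hy : f^[m] x ∈ Icc a b := hmaps.iterate m hx
  rcases lt_trichotomy (f^[m] x) (f (f^[m] x)) with hlt | heq | hgt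
  · rw [hlt.cmp_eq_lt, (lt_iterate_succ_of_lt_apply_s14 hf hmaps hcycle hy hlt k).cmp_eq_lt]
  · rw [iterate_fixed heq.symm, ← heq]
  · rw [hgt.cmp_eq_gt, (iterate_succ_lt_of_apply_lt hf hmaps hcycle hy hgt k).cmp_eq_gt]

end TwoCycleFree

/-- The points whose first `n + 1` iterates visit `K 0, …, K n` in turn. -/
def itinerarySet {X : Type*} (f : X → X) (K : ℕ → Set X) (n : ℕ) : Set X :=
  {x | ∀ k ≤ n, f^[k] x ∈ K k}

section Itinerary

variable {X : Type*} {f : X → X} {K : ℕ → Set X}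

theorem itinerarySet_zero (f : X → X) (K : ℕ → Set X) : itinerarySet f K 0 = K 0 := by
  ext x
  simp [itinerarySet]

theorem itinerarySet_succ (f : X → X) (K : ℕ → Set X) (n : ℕ) :
    itinerarySet f K (n + 1) = K 0 ∩ f ⁻¹' itinerarySet f (fun k => K (k + 1)) n := by
  ext x
  simp only [itinerarySet, mem_ofPred_eq, mem_inter_iff, mem_preimage, ← iterate_succ_apply]
  refine ⟨fun h => ⟨h 0 (Nat.zero_le _), fun k hk => h (k + 1) (by lia)⟩, ?_⟩
  rintro ⟨h0, h⟩ (_ | k) hk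
  · exact h0
  · exact h k (by lia)

theorem nonempty_itinerarySet (hne : ∀ n, (K n).Nonempty)
    (hsurj : ∀ n, SurjOn f (K n) (K (n + 1))) (n : ℕ) : (itinerarySet f K n).Nonempty := by
  induction n generalizing K with
  | zero => exact itinerarySet_zero f K ▸ hne 0
  | succ n ih =>
    obtain ⟨y, hy⟩ := ih (fun n => hne (n + 1)) fun n => hsurj (n + 1)
    obtain ⟨x, hx, rfl⟩ := hsurj 0 (hy 0 (Nat.zero_le n))
    exact ⟨x, itinerarySet_succ f K n ▸ ⟨hx, hy⟩⟩

variable [TopologicalSpace X]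

theorem isClosed_itinerarySet (hK : ∀ n, IsClosed (K n)) (hf : ∀ n, ContinuousOn f (K n)) (n : ℕ) :
    IsClosed (itinerarySet f K n) := by
  induction n generalizing K with
  | zero => exact itinerarySet_zero f K ▸ hK 0
  | succ n ih =>
    rw [itinerarySet_succ]
    exact (hf 0).preimage_isClosed_of_isClosed (hK 0) (ih (fun n => hK (n + 1)) fun n => hf (n + 1))

theorem exists_forall_iterate_mem (hcompact : IsCompact (K 0)) (hclosed : ∀ n, IsClosed (K n))
    (hne : ∀ n, (K n).Nonempty) (hf : ∀ n, ContinuousOn f (K n))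
    (hsurj : ∀ n, SurjOn f (K n) (K (n + 1))) : ∃ x, ∀ n, f^[n] x ∈ K n := by
  obtain ⟨x, hx⟩ := IsCompact.nonempty_iInter_of_sequence_nonempty_isCompact_isClosed
    (itinerarySet f K) (fun n x hx k hk => hx k (hk.trans n.le_succ))
    (nonempty_itinerarySet hne hsurj) (itinerarySet_zero f K ▸ hcompact)
    (isClosed_itinerarySet hclosed hf)
  exact ⟨x, fun n => mem_iInter.1 hx n n le_rfl⟩

end Itinerary

/-- Along the filter `l`, the function `f` keeps taking values on both sides of `c`. -/
def OscillatesAround {X α : Type*} [LT α] (f : X → α) (c : α) (l : Filter X) : Prop :=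
  (∃ᶠ x in l, f x < c) ∧ ∃ᶠ x in l, c < f x

section Oscillation

variable {α β : Type*} [ConditionallyCompleteLinearOrder α] [TopologicalSpace α] [OrderTopology α]
  [DenselyOrdered α] [LinearOrder β] [TopologicalSpace β] [OrderTopology β] {s : Set α} {c : α}

theorem exists_isCompact_surjOn_of_lt_of_gt {f : α → β} {d : β} (hs : s.OrdConnected)
    (hf : ContinuousOn f s) (hlt : ∃ x ∈ s, f x < d) (hgt : ∃ x ∈ s, d < f x) :
    ∃ K ⊆ s, IsCompact K ∧ ∃ V ∈ 𝓝 d, SurjOn f K V := by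
  obtain ⟨x, hx, hfx⟩ := hlt
  obtain ⟨y, hy, hfy⟩ := hgt
  have hsub : uIcc x y ⊆ s := hs.uIcc_subset hx hy
  exact ⟨uIcc x y, hsub, isCompact_uIcc, Icc (f x) (f y), Icc_mem_nhds hfx hfy,
    (hf.mono hsub).surjOn_Icc left_mem_uIcc right_mem_uIcc⟩

theorem OscillatesAround.exists_isCompact_surjOn {f : α → β} {d : β} {t : Set α}
    (ht : t.OrdConnected) (hosc : OscillatesAround f d (𝓝[t] c)) (hs : s ∈ 𝓝 c)
    (hf : ContinuousOn f s) :
    ∃ K ⊆ s ∩ t, IsCompact K ∧ ∃ V ∈ 𝓝 d, SurjOn f K V := by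
  have hmem : ordConnectedComponent s c ∩ t ∈ 𝓝[t] c :=
    inter_mem (mem_nhdsWithin_of_mem_nhds (ordConnectedComponent_mem_nhds.2 hs)) self_mem_nhdsWithin
  have hsub : ordConnectedComponent s c ∩ t ⊆ s ∩ t :=
    inter_subset_inter_left t ordConnectedComponent_subset
  obtain ⟨K, hK, hcompact, hsurj⟩ := exists_isCompact_surjOn_of_lt_of_gt
    (OrdConnected.inter inferInstance ht) (hf.mono (hsub.trans inter_subset_left))
    ((hosc.1.and_eventually hmem).exists.imp fun _ h => h.symm)
    ((hosc.2.and_eventually hmem).exists.imp fun _ h => h.symm)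
  exact ⟨K, hK.trans hsub, hcompact, hsurj⟩

theorem exists_isCompact_cmp_eq_surjOn {f : α → α} (hs : s ∈ 𝓝 c) (hf : ContinuousOn f s)
    (hc : f c = c) (hleft : OscillatesAround f c (𝓝[<] c))
    (hright : OscillatesAround f c (𝓝[>] c)) (o : Ordering) :
    ∃ K ⊆ {x ∈ s | cmp x c = o}, IsCompact K ∧
      ∃ V ∈ 𝓝 c, SurjOn f K {y ∈ V | o = .eq → cmp y c = .eq} := by
  cases o with
  | lt =>
    obtain ⟨K, hK, hcompact, V, hV, hsurj⟩ := hleft.exists_isCompact_surjOn ordConnected_Iio hs hf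
    exact ⟨K, fun x hx => ⟨(hK hx).1, (cmp_eq_lt_iff _ _).2 (hK hx).2⟩, hcompact, V, hV,
      hsurj.mono subset_rfl (sep_subset _ _)⟩
  | eq =>
    refine ⟨{c}, singleton_subset_iff.2 ⟨mem_of_mem_nhds hs, cmp_self_eq_eq c⟩, isCompact_singleton,
      univ, univ_mem, fun y hy => ⟨c, rfl, ?_⟩⟩
    rw [hc, (cmp_eq_eq_iff _ _).1 (hy.2 rfl)]
  | gt =>
    obtain ⟨K, hK, hcompact, V, hV, hsurj⟩ := hright.exists_isCompact_surjOn ordConnected_Ioi hs hf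
    exact ⟨K, fun x hx => ⟨(hK hx).1, (cmp_eq_gt_iff _ _).2 (hK hx).2⟩, hcompact, V, hV,
      hsurj.mono subset_rfl (sep_subset _ _)⟩

theorem exists_forall_cmp_iterate_eq {f : α → α} (hs : s ∈ 𝓝 c) (hf : ContinuousOn f s)
    (hc : f c = c) (hleft : OscillatesAround f c (𝓝[<] c))
    (hright : OscillatesAround f c (𝓝[>] c))
    {σ : ℕ → Ordering} (hσ : ∀ n, σ n = .eq → σ (n + 1) = .eq) :
    ∃ x ∈ s, ∀ n, cmp (f^[n] x) c = σ n := by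
  have hstep (U : {U : Set α // U ∈ 𝓝 c}) (o : Ordering) :=
    exists_isCompact_cmp_eq_surjOn (inter_mem hs U.2) (hf.mono inter_subset_left) hc hleft hright o
  choose K hKsub hKcompact V hV hKsurj using hstep
  let U : ℕ → {U : Set α // U ∈ 𝓝 c} :=
    Nat.rec ⟨univ, univ_mem⟩ fun n W => ⟨V W (σ n), hV W (σ n)⟩
  have hsub (n : ℕ) : K (U (n + 1)) (σ (n + 1)) ⊆
      {y ∈ V (U n) (σ n) | σ n = .eq → cmp y c = .eq} := fun y hy =>
    ⟨(hKsub _ _ hy).1.2, fun h => (hKsub _ _ hy).2.trans (hσ n h)⟩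
  have hsurj (n : ℕ) : SurjOn f (K (U n) (σ n)) (K (U (n + 1)) (σ (n + 1))) :=
    (hKsurj (U n) (σ n)).mono subset_rfl (hsub n)
  have hne (n : ℕ) : (K (U n) (σ n)).Nonempty := by
    obtain ⟨x, hx, -⟩ := hKsurj (U n) (σ n) ⟨mem_of_mem_nhds (hV _ _), fun _ => cmp_self_eq_eq c⟩
    exact ⟨x, hx⟩
  obtain ⟨x, hx⟩ := exists_forall_iterate_mem (hKcompact (U 0) (σ 0))
    (fun n => (hKcompact (U n) (σ n)).isClosed) hne
    (fun n => hf.mono fun y hy => (hKsub _ _ hy).1.1) hsurj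
  exact ⟨x, (hKsub _ _ (hx 0)).1.1, fun n => (hKsub _ _ (hx n)).2⟩

end Oscillation

theorem twoCycleFreeOn_of_lipschitzOnWith {X : Type*} [MetricSpace X] {f : X → X} {K : ℝ≥0}
    {s : Set X} (hf : LipschitzOnWith K f s) (hK : K < 1) : TwoCycleFreeOn f s := by
  rintro ⟨x, hx, y, hy, hne, rfl, hfy⟩
  have hle : dist (f x) x ≤ K * dist x (f x) := by
    simpa only [hfy] using hf.dist_le_mul x hx (f x) hy
  have hlt : K * dist x (f x) < dist x (f x) :=
    mul_lt_of_lt_one_left (dist_pos.2 hne) (by exact_mod_cast hK)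
  exact (hle.trans_lt hlt).ne (dist_comm _ _)

theorem mapsTo_closedBall_of_lipschitzOnWith {X : Type*} [PseudoMetricSpace X] {f : X → X}
    {K : ℝ≥0} {c : X} {r : ℝ} (hf : LipschitzOnWith K f (Metric.closedBall c r)) (hK : K ≤ 1)
    (hc : f c = c) : MapsTo f (Metric.closedBall c r) (Metric.closedBall c r) := by
  intro x hx
  have hc_mem : c ∈ Metric.closedBall c r := Metric.mem_closedBall_self (dist_nonneg.trans hx)
  calc dist (f x) c = dist (f x) (f c) := by rw [hc]
    _ ≤ K * dist x c := hf.dist_le_mul x hx c hc_mem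
    _ ≤ dist x c := mul_le_of_le_one_left dist_nonneg (by exact_mod_cast hK)
    _ ≤ r := hx

theorem cmp_apply_self_of_lipschitzOnWith {f : ℝ → ℝ} {K : ℝ≥0} {s : Set ℝ} {c x : ℝ}
    (hf : LipschitzOnWith K f s) (hK : K < 1) (hcs : c ∈ s) (hc : f c = c) (hx : x ∈ s) :
    cmp x (f x) = cmp x c := by
  rcases eq_or_ne x c with rfl | hne
  · rw [hc]
  have hlt : |f x - c| < |x - c| := by
    calc |f x - c| ≤ K * |x - c| := by simpa only [hc, Real.dist_eq] using hf.dist_le_mul x hx c hcs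
      _ < |x - c| := mul_lt_of_lt_one_left (abs_pos.2 (sub_ne_zero.2 hne)) (by exact_mod_cast hK)
  rcases hne.lt_or_gt with hxc | hcx
  · rw [abs_of_neg (sub_neg.2 hxc)] at hlt
    have hxf : x < f x := by linarith [neg_lt_of_abs_lt hlt]
    rw [hxf.cmp_eq_lt, hxc.cmp_eq_lt]
  · rw [abs_of_pos (sub_pos.2 hcx)] at hlt
    have hfx : f x < x := by linarith [lt_of_abs_lt hlt]
    rw [hfx.cmp_eq_gt, hcx.cmp_eq_gt]

theorem exists_sameOrderPattern_of_lipschitzOnWith {f : ℝ → ℝ} {K : ℝ≥0} {c r : ℝ} (hr : 0 < r)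
    (hf : LipschitzOnWith K f (Icc (c - r) (c + r))) (hK : K < 1) (hc : f c = c)
    (hleft : OscillatesAround f c (𝓝[<] c)) (hright : OscillatesAround f c (𝓝[>] c))
    {α : Type*} [ConditionallyCompleteLinearOrder α] [TopologicalSpace α] [OrderTopology α]
    [DenselyOrdered α] {a b p : α} {h : α → α} (hh : ContinuousOn h (Icc a b))
    (hmaps : MapsTo h (Icc a b) (Icc a b)) (hcycle : TwoCycleFreeOn h (Icc a b))
    (hp : p ∈ Icc a b) :
    ∃ q ∈ Icc (c - r) (c + r), SameOrderPattern (fun n => h^[n] p) (fun n => f^[n] q) := by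
  have hnhds : Icc (c - r) (c + r) ∈ 𝓝 c := Icc_mem_nhds (by linarith) (by linarith)
  have hfmaps : MapsTo f (Icc (c - r) (c + r)) (Icc (c - r) (c + r)) := by
    rw [← Real.closedBall_eq_Icc] at hf ⊢
    exact mapsTo_closedBall_of_lipschitzOnWith hf hK.le hc
  obtain ⟨q, hq, hqcmp⟩ := exists_forall_cmp_iterate_eq hnhds hf.continuousOn hc hleft hright
    (σ := fun n => cmp (h^[n] p) (h^[n + 1] p)) fun n hn => by
      rw [cmp_eq_eq_iff] at hn ⊢
      rw [iterate_succ_apply', iterate_succ_apply' h (n + 1), ← hn]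
  have hfcycle := twoCycleFreeOn_of_lipschitzOnWith hf hK
  refine ⟨q, hq, sameOrderPattern_of_cmp_eq fun m n hmn => ?_⟩
  calc cmp (h^[m] p) (h^[n] p) = cmp (h^[m] p) (h^[m + 1] p) :=
        cmp_iterate_iterate_of_lt hh hmaps hcycle hp hmn
    _ = cmp (f^[m] q) c := (hqcmp m).symm
    _ = cmp (f^[m] q) (f^[m + 1] q) := by
        rw [iterate_succ_apply', cmp_apply_self_of_lipschitzOnWith hf hK (mem_of_mem_nhds hnhds) hc
          (hfmaps.iterate m hq)]
    _ = cmp (f^[m] q) (f^[n] q) :=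
        (cmp_iterate_iterate_of_lt hf.continuousOn hfmaps hfcycle hq hmn).symm

theorem frequently_atTop_of_periodic_s14 {α β : Type*} [AddCommGroup α] [LinearOrder α]
    [IsOrderedAddMonoid α] [Archimedean α] {f : α → β} {T : α} (hf : Periodic f T) (hT : 0 < T)
    {p : β → Prop} (x : α) (hx : p (f x)) : ∃ᶠ t in atTop, p (f t) := by
  refine frequently_atTop.2 fun a => ?_
  obtain ⟨y, hy, hxy⟩ := hf.exists_mem_Ioc hT x a
  exact ⟨y, hy.1.le, hxy ▸ hx⟩

/-- The function `x ↦ (x³ / 5) sin (1 / x)`. The convention `1 / 0 = 0` gives the value `0` at `0`,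
which makes it continuous there. -/
noncomputable def sineContraction (x : ℝ) : ℝ :=
  x ^ 3 / 5 * Real.sin (1 / x)

theorem sineContraction_neg (x : ℝ) : sineContraction (-x) = sineContraction x := by
  simp only [sineContraction, div_neg, Real.sin_neg]
  ring

theorem sineContraction_zero : sineContraction 0 = 0 := by
  simp [sineContraction]

theorem oscillatesAround_sineContraction_nhdsGT :
    OscillatesAround sineContraction 0 (𝓝[>] 0) := by
  have frequently_inv {p : ℝ → Prop} (t : ℝ) (ht : p (Real.sin t)) :
      ∃ᶠ x in 𝓝[>] (0 : ℝ), p (Real.sin (1 / x)) := by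
    refine tendsto_inv_atTop_nhdsGT_zero.frequently ?_
    simpa only [one_div, inv_inv] using
      frequently_atTop_of_periodic_s14 Real.sin_periodic Real.two_pi_pos t ht
  constructor
  · refine ((frequently_inv (p := (· < 0)) (-(Real.pi / 2)) (by simp)).and_eventually
      self_mem_nhdsWithin).mono fun x hx => ?_
    have hpos : 0 < x := hx.2
    exact mul_neg_of_pos_of_neg (by positivity) hx.1
  · refine ((frequently_inv (p := (0 < ·)) (Real.pi / 2) (by simp)).and_eventually
      self_mem_nhdsWithin).mono fun x hx => ?_
    have hpos : 0 < x := hx.2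
    exact mul_pos (by positivity) hx.1

theorem oscillatesAround_sineContraction_nhdsLT :
    OscillatesAround sineContraction 0 (𝓝[<] 0) := by
  have hneg : Tendsto (fun x : ℝ => -x) (𝓝[>] 0) (𝓝[<] 0) := by
    simpa only [neg_zero] using tendsto_neg_nhdsGT (a := (0 : ℝ))
  obtain ⟨hlt, hgt⟩ := oscillatesAround_sineContraction_nhdsGT
  constructor
  · exact hneg.frequently (by simpa only [sineContraction_neg] using hlt)
  · exact hneg.frequently (by simpa only [sineContraction_neg] using hgt)

theorem hasDerivAt_sineContraction_zero : HasDerivAt sineContraction 0 0 := by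
  have hbound : sineContraction =O[𝓝 0] fun x : ℝ => ‖x - 0‖ ^ 3 := by
    refine Asymptotics.IsBigO.of_bound (1 / 5) (Eventually.of_forall fun x => ?_)
    rw [sineContraction, norm_mul, norm_div, norm_pow, sub_zero, norm_pow, norm_norm,
      Real.norm_ofNat]
    calc ‖x‖ ^ 3 / 5 * ‖Real.sin (1 / x)‖ ≤ ‖x‖ ^ 3 / 5 :=
          mul_le_of_le_one_right (by positivity) (Real.abs_sin_le_one _)
      _ = 1 / 5 * ‖x‖ ^ 3 := by ring
  simpa using (hbound.hasFDerivAt (by norm_num)).hasDerivAt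

theorem hasDerivAt_sineContraction {x : ℝ} (hx : x ≠ 0) :
    HasDerivAt sineContraction
      (3 * x ^ 2 / 5 * Real.sin (1 / x) - x / 5 * Real.cos (1 / x)) x := by
  have hsin : HasDerivAt (fun y : ℝ => Real.sin (1 / y)) (Real.cos (1 / x) * -(x ^ 2)⁻¹) x := by
    simpa only [one_div] using (hasDerivAt_inv hx).sin
  refine (((hasDerivAt_pow 3 x).div_const 5).mul hsin).congr_deriv ?_
  field_simp
  ring

theorem abs_deriv_sineContraction_le {x : ℝ} (hx : |x| ≤ 1) :
    |deriv sineContraction x| ≤ 4 / 5 := by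
  rcases eq_or_ne x 0 with rfl | hne
  · rw [hasDerivAt_sineContraction_zero.deriv]
    norm_num
  rw [(hasDerivAt_sineContraction hne).deriv]
  have hsq : x ^ 2 ≤ 1 := (sq_le_one_iff_abs_le_one x).2 hx
  calc |3 * x ^ 2 / 5 * Real.sin (1 / x) - x / 5 * Real.cos (1 / x)|
      ≤ |3 * x ^ 2 / 5 * Real.sin (1 / x)| + |x / 5 * Real.cos (1 / x)| := abs_sub _ _
    _ = 3 * x ^ 2 / 5 * |Real.sin (1 / x)| + |x| / 5 * |Real.cos (1 / x)| := by
        rw [abs_mul, abs_mul, abs_div x, abs_of_nonneg (by positivity : 0 ≤ 3 * x ^ 2 / 5),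
          Nat.abs_ofNat]
    _ ≤ 3 * 1 / 5 * 1 + 1 / 5 * 1 := by
        gcongr
        · exact Real.abs_sin_le_one _
        · exact Real.abs_cos_le_one _
    _ = 4 / 5 := by norm_num

theorem lipschitzOnWith_sineContraction :
    LipschitzOnWith (4 / 5) sineContraction (Icc (-1) 1) := by
  refine (convex_Icc (-1 : ℝ) 1).lipschitzOnWith_of_nnnorm_deriv_le (fun x _ => ?_) fun x hx => ?_
  · rcases eq_or_ne x 0 with rfl | hne
    · exact hasDerivAt_sineContraction_zero.differentiableAt
    · exact (hasDerivAt_sineContraction hne).differentiableAt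
  · rw [← NNReal.coe_le_coe]
    exact abs_deriv_sineContraction_le (abs_le.2 hx)

theorem stmt_14_general (g : ℝ → ℝ) (hg0 : g 0 = 0)
    (hgx : ∀ x : ℝ, x ≠ 0 → g x = x ^ 3 / 5 * Real.sin (1 / x)) :
    MapsTo g (Icc (-1) 1) (Icc (-1) 1) ∧
    (∀ x ∈ Icc (-1 : ℝ) 1, ∀ y ∈ Icc (-1 : ℝ) 1, |g x - g y| ≤ 4 / 5 * |x - y|) ∧
    TwoCycleFreeOn g (Icc (-1) 1) ∧
    ∀ {α : Type*} [ConditionallyCompleteLinearOrder α] [TopologicalSpace α] [OrderTopology α]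
      [DenselyOrdered α] (a b : α) (h : α → α), ContinuousOn h (Icc a b) →
      MapsTo h (Icc a b) (Icc a b) → TwoCycleFreeOn h (Icc a b) →
      ∀ p ∈ Icc a b, ∃ q ∈ Icc (-1 : ℝ) 1,
        SameOrderPattern (fun n => h^[n] p) (fun n => g^[n] q) := by
  obtain rfl : g = sineContraction := by
    funext x
    rcases eq_or_ne x 0 with rfl | hx
    · rw [hg0, sineContraction_zero]
    · exact hgx x hx
  have hball : Icc (-1 : ℝ) 1 = Icc (0 - 1) (0 + 1) := by norm_num
  have hlip := lipschitzOnWith_sineContraction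
  have hlt : (4 / 5 : ℝ≥0) < 1 := by rw [div_lt_one (by norm_num)]; norm_num
  refine ⟨?_, hlip.dist_le_mul, twoCycleFreeOn_of_lipschitzOnWith hlip hlt, ?_⟩
  · rw [hball, ← Real.closedBall_eq_Icc] at hlip ⊢
    exact mapsTo_closedBall_of_lipschitzOnWith hlip hlt.le sineContraction_zero
  · intro α _ _ _ _ a b h hh hmaps hcycle p hp
    rw [hball] at hlip ⊢
    exact exists_sameOrderPattern_of_lipschitzOnWith one_pos hlip hlt sineContraction_zero
      oscillatesAround_sineContraction_nhdsLT oscillatesAround_sineContraction_nhdsGT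
      hh hmaps hcycle hp

/-- The contraction g(x) = (x³/5) sin(1/x) maps [-1,1] into itself, is 4/5-Lipschitz
there, has no 2-cycle, and is universal for the first Sharkovsky class on [-1,1]. -/
theorem stmt_14 (g : ℝ → ℝ) (hg0 : g 0 = 0)
    (hgx : ∀ x : ℝ, x ≠ 0 → g x = x ^ 3 / 5 * Real.sin (1 / x)) :
    Set.MapsTo g (Set.Icc (-1 : ℝ) 1) (Set.Icc (-1 : ℝ) 1) ∧
    (∀ x ∈ Set.Icc (-1 : ℝ) 1, ∀ y ∈ Set.Icc (-1 : ℝ) 1,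
      |g x - g y| ≤ 4 / 5 * |x - y|) ∧
    (¬ ∃ x ∈ Set.Icc (-1 : ℝ) 1, ∃ y ∈ Set.Icc (-1 : ℝ) 1,
      x ≠ y ∧ g x = y ∧ g y = x) ∧
    (∀ h : ℝ → ℝ,
      ContinuousOn h (Set.Icc (-1 : ℝ) 1) →
      Set.MapsTo h (Set.Icc (-1 : ℝ) 1) (Set.Icc (-1 : ℝ) 1) →
      (¬ ∃ x ∈ Set.Icc (-1 : ℝ) 1, ∃ y ∈ Set.Icc (-1 : ℝ) 1,
        x ≠ y ∧ h x = y ∧ h y = x) →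
      ∀ p ∈ Set.Icc (-1 : ℝ) 1, ∃ q ∈ Set.Icc (-1 : ℝ) 1,
        ∀ m n : ℕ, (h^[m] p < h^[n] p ↔ g^[m] q < g^[n] q)) := by
  obtain ⟨hmaps, hlip, hcycle, huniv⟩ := stmt_14_general g hg0 hgx
  exact ⟨hmaps, hlip, hcycle, huniv (-1) 1⟩
end
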